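/- For every integer p ≥ 1, the number of CNATs of size 2p whose associated permutation has sign +1 equals (T_{2p} + (−1)^p T_p)/2, and the number of CNATs of size 2p whose associated permutation has sign −1 equals (T_{2p} − (−1)^p T_p)/2, where T_n is the total number of CNATs of size n. -/

import Mathlib

/-!
Formalization of complete non-ambiguous trees (CNATs).

A CNAT of size `n` is modelled as a Boolean filling `D : Fin n → Fin n → Bool`
of the `n × n` grid (`D i j = true` meaning that cell in row `i`, column `j`
is dotted; rows are numbered from the top, columns from the left, `0`-based),
satisfying the root, non-ambiguity, minimality and completeness conditions.
-/

namespace CNATf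

/-- A filling of the `n × n` grid. -/
abbrev Grid (n : ℕ) := Fin n → Fin n → Bool

/-- Cell `(i, j)` is dotted. -/
def Dotted {n : ℕ} (D : Grid n) (i j : Fin n) : Prop := D i j = true

/-- There is a dotted cell above `(i, j)` in the same column. -/
def HasDotAbove {n : ℕ} (D : Grid n) (i j : Fin n) : Prop :=
  ∃ i' : Fin n, i' < i ∧ Dotted D i' j

/-- There is a dotted cell to the left of `(i, j)` in the same row. -/
def HasDotLeft {n : ℕ} (D : Grid n) (i j : Fin n) : Prop :=
  ∃ j' : Fin n, j' < j ∧ Dotted D i j'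

/-- There is a dotted cell below `(i, j)` in the same column. -/
def HasDotBelow {n : ℕ} (D : Grid n) (i j : Fin n) : Prop :=
  ∃ i' : Fin n, i < i' ∧ Dotted D i' j

/-- There is a dotted cell to the right of `(i, j)` in the same row. -/
def HasDotRight {n : ℕ} (D : Grid n) (i j : Fin n) : Prop :=
  ∃ j' : Fin n, j < j' ∧ Dotted D i j'

/-- `D` is a complete non-ambiguous tree (CNAT) on the `n × n` grid:
root, non-ambiguity, minimality (rows and columns), completeness. -/
def IsCNAT {n : ℕ} (D : Grid n) : Prop :=
  (∀ i j : Fin n, (i : ℕ) = 0 → (j : ℕ) = 0 → Dotted D i j) ∧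
  (∀ i j : Fin n, Dotted D i j → ¬((i : ℕ) = 0 ∧ (j : ℕ) = 0) →
      Xor' (HasDotAbove D i j) (HasDotLeft D i j)) ∧
  (∀ i : Fin n, ∃ j : Fin n, Dotted D i j) ∧
  (∀ j : Fin n, ∃ i : Fin n, Dotted D i j) ∧
  (∀ i j : Fin n, Dotted D i j →
      (HasDotBelow D i j ∧ HasDotRight D i j) ∨ (¬HasDotBelow D i j ∧ ¬HasDotRight D i j))

/-- A leaf: a dotted cell with no dot below it in its column and no dot
to its right in its row. -/
def IsLeaf {n : ℕ} (D : Grid n) (i j : Fin n) : Prop :=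
  Dotted D i j ∧ ¬HasDotBelow D i j ∧ ¬HasDotRight D i j

/-- An internal dot: a dotted cell with both a dot below it in its column and
a dot to its right in its row. -/
def IsInternal {n : ℕ} (D : Grid n) (i j : Fin n) : Prop :=
  Dotted D i j ∧ HasDotBelow D i j ∧ HasDotRight D i j

/-- `p` is the nearest dotted cell above `l` in the column of `l`. -/
def ParentAbove {n : ℕ} (D : Grid n) (p l : Fin n × Fin n) : Prop :=
  p.2 = l.2 ∧ p.1 < l.1 ∧ Dotted D p.1 p.2 ∧
    ∀ k : Fin n, p.1 < k → k < l.1 → ¬Dotted D k l.2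

/-- `p` is the nearest dotted cell to the left of `l` in the row of `l`,
and there is no dotted cell above `l` in its column. -/
def ParentLeft {n : ℕ} (D : Grid n) (p l : Fin n × Fin n) : Prop :=
  p.1 = l.1 ∧ p.2 < l.2 ∧ Dotted D p.1 p.2 ∧
    (∀ k : Fin n, p.2 < k → k < l.2 → ¬Dotted D l.1 k) ∧
    ¬HasDotAbove D l.1 l.2

/-- `p` is the parent of the dot `l`: the nearest dotted cell above `l` in its
column if such a cell exists, otherwise the nearest dotted cell to its left. -/
def IsParent {n : ℕ} (D : Grid n) (p l : Fin n × Fin n) : Prop :=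
  ParentAbove D p l ∨ ParentLeft D p l

/-- `c` is the left child of the internal dot `p`: the nearest dot below `p`
in the column of `p`. -/
def IsLeftChild {n : ℕ} (D : Grid n) (p c : Fin n × Fin n) : Prop :=
  c.2 = p.2 ∧ p.1 < c.1 ∧ Dotted D c.1 c.2 ∧
    ∀ k : Fin n, p.1 < k → k < c.1 → ¬Dotted D k p.2

/-- `c` is the right child of the internal dot `p`: the nearest dot to the
right of `p` in the row of `p`. -/
def IsRightChild {n : ℕ} (D : Grid n) (p c : Fin n × Fin n) : Prop :=
  c.1 = p.1 ∧ p.2 < c.2 ∧ Dotted D c.1 c.2 ∧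
    ∀ k : Fin n, p.2 < k → k < c.2 → ¬Dotted D p.1 k

/-- A left leaf: a leaf whose parent is above it in its column. -/
def IsLeftLeaf {n : ℕ} (D : Grid n) (l : Fin n × Fin n) : Prop :=
  IsLeaf D l.1 l.2 ∧ ∃ p : Fin n × Fin n, ParentAbove D p l

/-- A right leaf: a leaf whose parent is to its left in its row. -/
def IsRightLeaf {n : ℕ} (D : Grid n) (l : Fin n × Fin n) : Prop :=
  IsLeaf D l.1 l.2 ∧ ∃ p : Fin n × Fin n, ParentLeft D p l

/-- A short leaf: a leaf whose parent lies in a cell adjacent to it. -/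
def IsShortLeaf {n : ℕ} (D : Grid n) (l : Fin n × Fin n) : Prop :=
  IsLeaf D l.1 l.2 ∧ ∃ p : Fin n × Fin n, IsParent D p l ∧
    (((p.1 : ℕ) + 1 = (l.1 : ℕ) ∧ p.2 = l.2) ∨ ((p.2 : ℕ) + 1 = (l.2 : ℕ) ∧ p.1 = l.1))

/-- A long leaf: a leaf which is not short. -/
def IsLongLeaf {n : ℕ} (D : Grid n) (l : Fin n × Fin n) : Prop :=
  IsLeaf D l.1 l.2 ∧ ¬IsShortLeaf D l

/-- All leaves of `D` are short (i.e. `D ∈ 𝒜ₙ`). -/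
def AllLeavesShort {n : ℕ} (D : Grid n) : Prop :=
  ∀ l : Fin n × Fin n, IsLeaf D l.1 l.2 → IsShortLeaf D l

/-- `π` is the permutation associated with the CNAT `D`: for every row `i`,
the leaf of row `i` lies in column `π i`. -/
def IsAssocPerm {n : ℕ} (D : Grid n) (π : Equiv.Perm (Fin n)) : Prop :=
  ∀ i : Fin n, IsLeaf D i (π i)

/-- Two left leaves `l₁`, `l₂` (with respective parents `p₁`, `p₂`) are
interacting if `r(p₁) < r(l₂) < r(l₁)` or `r(p₂) < r(l₁) < r(l₂)`. -/
def InteractingLeft {n : ℕ} (D : Grid n) (l₁ l₂ : Fin n × Fin n) : Prop :=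
  IsLeftLeaf D l₁ ∧ IsLeftLeaf D l₂ ∧
    ∃ p₁ p₂ : Fin n × Fin n, ParentAbove D p₁ l₁ ∧ ParentAbove D p₂ l₂ ∧
      ((p₁.1 < l₂.1 ∧ l₂.1 < l₁.1) ∨ (p₂.1 < l₁.1 ∧ l₁.1 < l₂.1))

/-- Two right leaves `l₁`, `l₂` (with respective parents `p₁`, `p₂`) are
interacting if `c(p₁) < c(l₂) < c(l₁)` or `c(p₂) < c(l₁) < c(l₂)`. -/
def InteractingRight {n : ℕ} (D : Grid n) (l₁ l₂ : Fin n × Fin n) : Prop :=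
  IsRightLeaf D l₁ ∧ IsRightLeaf D l₂ ∧
    ∃ p₁ p₂ : Fin n × Fin n, ParentLeft D p₁ l₁ ∧ ParentLeft D p₂ l₂ ∧
      ((p₁.2 < l₂.2 ∧ l₂.2 < l₁.2) ∨ (p₂.2 < l₁.2 ∧ l₁.2 < l₂.2))

/-- Two leaves are interacting (as left leaves or as right leaves). -/
def Interacting {n : ℕ} (D : Grid n) (l₁ l₂ : Fin n × Fin n) : Prop :=
  InteractingLeft D l₁ l₂ ∨ InteractingRight D l₁ l₂

/-- The switch `S(T, l₁, l₂)` of two interacting leaves: `l₁` and `l₂` are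
erased and replaced by dots at `(r(l₂), c(l₁))` and `(r(l₁), c(l₂))`
(for left leaves this exchanges their row labels, for right leaves this
exchanges their column labels; both descriptions yield the same filling). -/
def switchLeaves {n : ℕ} (D : Grid n) (l₁ l₂ : Fin n × Fin n) : Grid n := fun i j =>
  if (i = l₂.1 ∧ j = l₁.2) ∨ (i = l₁.1 ∧ j = l₂.2) then true
  else if (i = l₁.1 ∧ j = l₁.2) ∨ (i = l₂.1 ∧ j = l₂.2) then false
  else D i j


section basics
variable {n : ℕ} {D : Grid n}

/-- Transposed grid. -/
def tr (D : Grid n) : Grid n := fun i j => D j i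

lemma tr_tr (D : Grid n) : tr (tr D) = D := rfl

lemma tr_leaf {i j : Fin n} : IsLeaf (tr D) i j ↔ IsLeaf D j i := by
  constructor
  · rintro ⟨a, b, c⟩; exact ⟨a, c, b⟩
  · rintro ⟨a, b, c⟩; exact ⟨a, c, b⟩

lemma tr_cnat (h : IsCNAT D) : IsCNAT (tr D) := by
  obtain ⟨h1, h2, h3, h4, h5⟩ := h
  refine ⟨fun i j hi hj => h1 j i hj hi, fun i j hd hn => ?_, h4, h3, fun i j hd => ?_⟩
  · have := h2 j i hd (fun h => hn ⟨h.2, h.1⟩)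
    exact this.symm
  · rcases h5 j i hd with ⟨a, b⟩ | ⟨a, b⟩
    · exact Or.inl ⟨b, a⟩
    · exact Or.inr ⟨b, a⟩

lemma row_leaf (h : IsCNAT D) (i : Fin n) : ∃ j, IsLeaf D i j := by
  classical
  obtain ⟨j0, hj0⟩ := h.2.2.1 i
  obtain ⟨j, hj, hm⟩ := Finset.exists_max_image (Finset.univ.filter fun j => Dotted D i j) id
    ⟨j0, by simpa using hj0⟩
  simp only [Finset.mem_filter, Finset.mem_univ, true_and, id] at hj hm
  have hr : ¬ HasDotRight D i j := by
    rintro ⟨j', hlt, hd⟩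
    exact absurd (hm j' hd) (not_le.2 hlt)
  refine ⟨j, hj, ?_, hr⟩
  rcases h.2.2.2.2 i j hj with h | h
  · exact absurd h.2 hr
  · exact h.1

lemma col_leaf (h : IsCNAT D) (j : Fin n) : ∃ i, IsLeaf D i j := by
  obtain ⟨i, hi⟩ := row_leaf (tr_cnat h) j
  exact ⟨i, tr_leaf.1 hi⟩

lemma leaf_row_ge {i j j' : Fin n} (h : IsLeaf D i j) (h' : Dotted D i j') : j' ≤ j := by
  by_contra hc
  exact h.2.2 ⟨j', not_le.1 hc, h'⟩

lemma leaf_col_ge {i i' j : Fin n} (h : IsLeaf D i j) (h' : Dotted D i' j) : i' ≤ i := by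
  by_contra hc
  exact h.2.1 ⟨i', not_le.1 hc, h'⟩

lemma leaf_row_unique {i j j' : Fin n} (h : IsLeaf D i j) (h' : IsLeaf D i j') : j = j' :=
  le_antisymm (leaf_row_ge h' h.1) (leaf_row_ge h h'.1)

lemma leaf_col_unique {i i' j : Fin n} (h : IsLeaf D i j) (h' : IsLeaf D i' j) : i = i' :=
  le_antisymm (leaf_col_ge h' h.1) (leaf_col_ge h h'.1)

lemma exists_perm (h : IsCNAT D) : ∃ π : Equiv.Perm (Fin n), IsAssocPerm D π := by
  choose f hf using row_leaf h
  have hinj : Function.Injective f := by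
    intro a b hab
    have hb := hf b
    rw [← hab] at hb
    exact leaf_col_unique (hf a) hb
  exact ⟨Equiv.ofBijective f (Finite.injective_iff_bijective.1 hinj), hf⟩

lemma perm_unique {π π' : Equiv.Perm (Fin n)} (h : IsAssocPerm D π) (h' : IsAssocPerm D π') :
    π = π' := by
  ext i
  rw [leaf_row_unique (h i) (h' i)]

lemma tr_assoc {π : Equiv.Perm (Fin n)} (h : IsAssocPerm D π) : IsAssocPerm (tr D) π⁻¹ := by
  intro i
  rw [tr_leaf]
  simpa using h (π⁻¹ i)

open Classical in
/-- The sign of a CNAT. -/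
noncomputable def sgn (D : Grid n) : ℤ :=
  if ∃ π : Equiv.Perm (Fin n), IsAssocPerm D π ∧ Equiv.Perm.sign π = 1 then 1 else -1

lemma sgn_eq {π : Equiv.Perm (Fin n)} (h : IsAssocPerm D π) :
    sgn D = ((Equiv.Perm.sign π : ℤˣ) : ℤ) := by
  unfold sgn
  split_ifs with hc
  · obtain ⟨π', h', hs⟩ := hc
    rw [perm_unique h h', hs]; rfl
  · rcases Int.units_eq_one_or (Equiv.Perm.sign π) with hs | hs
    · exact absurd ⟨π, h, hs⟩ hc
    · rw [hs]; rfl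

lemma sgn_tr (h : IsCNAT D) : sgn (tr D) = sgn D := by
  obtain ⟨π, hπ⟩ := exists_perm h
  rw [sgn_eq hπ, sgn_eq (tr_assoc hπ), Equiv.Perm.sign_inv]

/-- Permute the rows. -/
def rowPerm (s : Equiv.Perm (Fin n)) (D : Grid n) : Grid n := fun i j => D (s i) j

/-- `s` is increasing on the dots of every column, and fixes the first row. -/
def Good (s : Equiv.Perm (Fin n)) (D : Grid n) : Prop :=
  (∀ x y k, Dotted D x k → Dotted D y k → x < y → s.symm x < s.symm y) ∧
  (∀ i : Fin n, (i : ℕ) = 0 ↔ (s i : ℕ) = 0)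

lemma Good.lt_iff {s : Equiv.Perm (Fin n)} (h : Good s D) {x y k : Fin n}
    (hx : Dotted D x k) (hy : Dotted D y k) : s.symm x < s.symm y ↔ x < y := by
  refine ⟨fun hl => ?_, h.1 x y k hx hy⟩
  by_contra hc
  rcases lt_or_eq_of_le (not_lt.1 hc) with h1 | h1
  · exact absurd (h.1 y x k hy hx h1) (not_lt.2 hl.le)
  · rw [h1] at hl; exact lt_irrefl _ hl

lemma Good.above {s : Equiv.Perm (Fin n)} (h : Good s D) {i k : Fin n}
    (hd : Dotted D (s i) k) : HasDotAbove (rowPerm s D) i k ↔ HasDotAbove D (s i) k := by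
  constructor
  · rintro ⟨i', hlt, hd'⟩
    exact ⟨s i', (h.lt_iff hd' hd).1 (by simpa using hlt), hd'⟩
  · rintro ⟨i', hlt, hd'⟩
    refine ⟨s.symm i', ?_, by simpa [Dotted, rowPerm] using hd'⟩
    simpa using (h.lt_iff hd' hd).2 hlt

lemma Good.below {s : Equiv.Perm (Fin n)} (h : Good s D) {i k : Fin n}
    (hd : Dotted D (s i) k) : HasDotBelow (rowPerm s D) i k ↔ HasDotBelow D (s i) k := by
  constructor
  · rintro ⟨i', hlt, hd'⟩
    exact ⟨s i', (h.lt_iff hd hd').1 (by simpa using hlt), hd'⟩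
  · rintro ⟨i', hlt, hd'⟩
    refine ⟨s.symm i', ?_, by simpa [Dotted, rowPerm] using hd'⟩
    simpa using (h.lt_iff hd hd').2 hlt

lemma Good.leaf {s : Equiv.Perm (Fin n)} (h : Good s D) {i k : Fin n} :
    IsLeaf (rowPerm s D) i k ↔ IsLeaf D (s i) k := by
  constructor
  · rintro ⟨a, b, c⟩
    exact ⟨a, fun hb => b ((h.below a).2 hb), c⟩
  · rintro ⟨a, b, c⟩
    exact ⟨a, fun hb => b ((h.below a).1 hb), c⟩

lemma Good.cnat {s : Equiv.Perm (Fin n)} (h : Good s D) (hD : IsCNAT D) :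
    IsCNAT (rowPerm s D) := by
  obtain ⟨h1, h2, h3, h4, h5⟩ := hD
  refine ⟨fun i j hi hj => h1 _ j ((h.2 i).1 hi) hj, fun i j hd hn => ?_, fun i => h3 (s i),
    fun j => ?_, fun i j hd => ?_⟩
  · have := h2 (s i) j hd (fun hh => hn ⟨(h.2 i).2 hh.1, hh.2⟩)
    rw [h.above hd]
    exact this
  · obtain ⟨i, hi⟩ := h4 j
    exact ⟨s.symm i, by simpa [Dotted, rowPerm] using hi⟩
  · rw [h.below hd]
    exact h5 _ _ hd

lemma Good.assoc {s : Equiv.Perm (Fin n)} (h : Good s D) {π : Equiv.Perm (Fin n)}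
    (hπ : IsAssocPerm D π) : IsAssocPerm (rowPerm s D) (π * s) := by
  intro i
  rw [h.leaf]
  exact hπ (s i)

/-- Left leaf: leaf with a dot above. -/
def LL (D : Grid n) (i j : Fin n) : Prop := IsLeaf D i j ∧ HasDotAbove D i j

/-- Row containing a left leaf. -/
def LRow (D : Grid n) (i : Fin n) : Prop := ∃ j, LL D i j

lemma LL.row (hD : IsCNAT D) {i j k : Fin n} (h : LL D i j) (hk : Dotted D i k) : k = j := by
  by_contra hne
  have hlt : k < j := lt_of_le_of_ne (leaf_row_ge h.1 hk) hne
  obtain ⟨⟨hd, -, -⟩, i', hi', ha⟩ := h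
  have hx := hD.2.1 i j hd (fun hh => by
    have : (i' : ℕ) < i := hi'
    omega)
  rcases hx with ⟨_, hx⟩ | ⟨_, hx⟩
  · exact hx ⟨k, hlt, hk⟩
  · exact hx ⟨i', hi', ha⟩

lemma Good.LL_iff {s : Equiv.Perm (Fin n)} (h : Good s D) {i k : Fin n} :
    LL (rowPerm s D) i k ↔ LL D (s i) k := by
  constructor
  · rintro ⟨a, b⟩
    have a' := h.leaf.1 a
    exact ⟨a', (h.above a'.1).1 b⟩
  · rintro ⟨a, b⟩
    exact ⟨h.leaf.2 a, (h.above a.1).2 b⟩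

/-- Consecutive left leaf rows `r' < r` whose leaves interact. -/
def Inter (D : Grid n) (r' r : Fin n) : Prop :=
  r' < r ∧ LRow D r' ∧ (∀ k, r' < k → k < r → ¬ LRow D k) ∧
    ∃ j, LL D r j ∧ ∀ k, r' < k → k < r → ¬ Dotted D k j

/-- The last interacting pair. -/
def Canon (D : Grid n) (r' r : Fin n) : Prop :=
  Inter D r' r ∧ ∀ q' q, r < q → ¬ Inter D q' q

lemma Inter.good (hD : IsCNAT D) {r' r : Fin n} (h : Inter D r' r) : Good (Equiv.swap r' r) D := by
  obtain ⟨hlt, ⟨j', h'⟩, -, j, hj, hno⟩ := h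
  have c1 : ∀ x, Dotted D x j → x < r' ∨ x = r := by
    intro x hx
    have := leaf_col_ge hj.1 hx
    have h2 := hno x
    have h3 : x ≠ r' := by
      rintro rfl
      have := h'.row hD hx
      subst this
      exact h'.1.2.1 ⟨r, hlt, hj.1.1⟩
    grind
  have c2 : ∀ x, Dotted D x j' → x ≤ r' := fun x hx => leaf_col_ge h'.1 hx
  have c3 : ∀ k, Dotted D r k → k = j := fun k hk => hj.row hD hk
  have c4 : ∀ k, Dotted D r' k → k = j' := fun k hk => h'.row hD hk
  constructor
  · intro x y k hx hy hxy
    rw [Equiv.symm_swap, Equiv.swap_apply_def, Equiv.swap_apply_def]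
    grind
  · intro i
    have p1 : (r' : ℕ) ≠ 0 := by
      obtain ⟨i', hi', _⟩ := h'.2
      have : (i' : ℕ) < r' := hi'
      omega
    have p2 : (r' : ℕ) < r := hlt
    rw [Equiv.swap_apply_def]
    split_ifs with a b
    · subst a; omega
    · subst b; omega
    · rfl

lemma Canon.unique {a b c d : Fin n} (h : Canon D a b) (h' : Canon D c d) : a = c ∧ b = d := by
  have hbd : b = d := by
    rcases lt_trichotomy b d with h1 | h1 | h1
    · exact absurd h'.1 (h.2 _ _ h1)
    · exact h1
    · exact absurd h.1 (h'.2 _ _ h1)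
  subst hbd
  refine ⟨?_, rfl⟩
  rcases lt_trichotomy a c with h1 | h1 | h1
  · exact absurd h'.1.2.1 (h.1.2.2.1 c h1 h'.1.1)
  · exact h1
  · exact absurd h.1.2.1 (h'.1.2.2.1 a h1 h.1.1)

lemma exists_canon (h : ∃ r' r, Inter D r' r) : ∃ q : Fin n × Fin n, Canon D q.1 q.2 := by
  classical
  obtain ⟨a, b, hab⟩ := h
  obtain ⟨r, hr, hm⟩ := Finset.exists_max_image
    (Finset.univ.filter fun r => ∃ r', Inter D r' r) id ⟨b, by simpa using ⟨a, hab⟩⟩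
  simp only [Finset.mem_filter, Finset.mem_univ, true_and, id] at hr hm
  obtain ⟨r', hr'⟩ := hr
  exact ⟨(r', r), hr', fun q' q hq hi => absurd (hm q ⟨q', hi⟩) (not_le.2 hq)⟩

lemma Canon.swap (hD : IsCNAT D) {r' r : Fin n} (h : Canon D r' r) :
    Canon (rowPerm (Equiv.swap r' r) D) r' r := by
  have hg := h.1.good hD
  obtain ⟨⟨hlt, ⟨j', h'⟩, hcons, j, hj, hno⟩, hmax⟩ := h
  have hrow : ∀ k, LRow (rowPerm (Equiv.swap r' r) D) k ↔ LRow D k := by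
    intro k
    have : LRow (rowPerm (Equiv.swap r' r) D) k ↔ LRow D (Equiv.swap r' r k) :=
      exists_congr fun j => hg.LL_iff
    rw [this, Equiv.swap_apply_def]
    split_ifs with a b
    · subst a; exact ⟨fun _ => ⟨_, h'⟩, fun _ => ⟨_, hj⟩⟩
    · subst b; exact ⟨fun _ => ⟨_, hj⟩, fun _ => ⟨_, h'⟩⟩
    · rfl
  refine ⟨⟨hlt, (hrow _).2 ⟨j', h'⟩, fun k a b c => hcons k a b ((hrow k).1 c), j', ?_, ?_⟩, ?_⟩
  · rw [hg.LL_iff]; simpa using h'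
  · intro k h1 h2 hd
    have : Dotted D k j' := by
      have hd' : D (Equiv.swap r' r k) j' = true := hd
      rwa [Equiv.swap_apply_of_ne_of_ne h1.ne' h2.ne] at hd'
    exact absurd (leaf_col_ge h'.1 this) (not_le.2 h1)
  · rintro q' q hq ⟨i1, i2, i3, l, i4, i5⟩
    refine hmax q' q hq ⟨i1, (hrow _).1 i2, fun k a b c => i3 k a b ((hrow k).2 c), l, ?_, ?_⟩
    · rw [hg.LL_iff, Equiv.swap_apply_of_ne_of_ne (hlt.trans hq).ne' hq.ne'] at i4
      exact i4
    · intro k a b hd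
      have i4' : LL D q l := by
        rwa [hg.LL_iff, Equiv.swap_apply_of_ne_of_ne (hlt.trans hq).ne' hq.ne'] at i4
      have k1 : k ≠ r := by
        rintro rfl
        have := hj.row hD hd
        subst this
        exact hq.ne (leaf_col_unique hj.1 i4'.1)
      have k2 : k ≠ r' := by
        rintro rfl
        have := h'.row hD hd
        subst this
        exact (hlt.trans hq).ne (leaf_col_unique h'.1 i4'.1)
      refine i5 k a b ?_
      change D (Equiv.swap r' r k) l = true
      rwa [Equiv.swap_apply_of_ne_of_ne k2 k1]

open Classical in
/-- The sign-reversing involution. -/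
noncomputable def inv (D : Grid n) : Grid n :=
  if h : ∃ q : Fin n × Fin n, Canon D q.1 q.2 then
    rowPerm (Equiv.swap h.choose.1 h.choose.2) D else D

/-- Some two left leaves interact. -/
def HasInter (D : Grid n) : Prop := ∃ r' r, Inter D r' r

lemma Canon.inv_eq {r' r : Fin n} (h : Canon D r' r) :
    inv D = rowPerm (Equiv.swap r' r) D := by
  have hex : ∃ q : Fin n × Fin n, Canon D q.1 q.2 := ⟨(r', r), h⟩
  unfold inv
  rw [dif_pos hex]
  obtain ⟨a, b⟩ := hex.choose_spec.unique h
  rw [a, b]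

lemma inv_cnat (hD : IsCNAT D) (h : HasInter D) : IsCNAT (inv D) := by
  obtain ⟨q, hq⟩ := exists_canon h
  rw [hq.inv_eq]
  exact (hq.1.good hD).cnat hD

lemma inv_inter (hD : IsCNAT D) (h : HasInter D) : HasInter (inv D) := by
  obtain ⟨q, hq⟩ := exists_canon h
  rw [hq.inv_eq]
  exact ⟨_, _, (hq.swap hD).1⟩

lemma inv_inv (hD : IsCNAT D) (h : HasInter D) : inv (inv D) = D := by
  obtain ⟨q, hq⟩ := exists_canon h
  rw [hq.inv_eq, (hq.swap hD).inv_eq]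
  funext i j
  simp [rowPerm]

lemma inv_sgn (hD : IsCNAT D) (h : HasInter D) : sgn (inv D) = - sgn D := by
  obtain ⟨q, hq⟩ := exists_canon h
  rw [hq.inv_eq]
  obtain ⟨π, hπ⟩ := exists_perm hD
  rw [sgn_eq hπ, sgn_eq ((hq.1.good hD).assoc hπ), Equiv.Perm.sign_mul,
    Equiv.Perm.sign_swap hq.1.1.ne]
  simp

/-- `Inter` of the transpose is only affected by relabelling of rows. -/
lemma inter_tr_of_good {s : Equiv.Perm (Fin n)} (hs : Good s D) {r' r : Fin n}
    (h : Inter (tr D) r' r) : Inter (tr (rowPerm s D)) r' r := by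
  have hll : ∀ i j, LL (tr D) i j ↔ LL (tr (rowPerm s D)) i (s.symm j) := by
    intro i j
    have e : IsLeaf (rowPerm s D) (s.symm j) i ↔ IsLeaf D j i := by
      rw [hs.leaf]; simp
    have e2 : HasDotLeft (rowPerm s D) (s.symm j) i ↔ HasDotLeft D j i := by
      simp [HasDotLeft, Dotted, rowPerm]
    unfold LL
    rw [tr_leaf, tr_leaf, e]
    exact and_congr Iff.rfl e2.symm
  have hrow : ∀ i, LRow (tr D) i ↔ LRow (tr (rowPerm s D)) i := by
    intro i
    constructor
    · rintro ⟨j, hj⟩; exact ⟨_, (hll i j).1 hj⟩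
    · rintro ⟨j, hj⟩; exact ⟨s j, (hll i (s j)).2 (by simpa using hj)⟩
  obtain ⟨h1, h2, h3, j, h4, h5⟩ := h
  refine ⟨h1, (hrow _).1 h2, fun k a b c => h3 k a b ((hrow k).2 c), s.symm j, (hll _ _).1 h4, ?_⟩
  intro k a b c
  exact h5 k a b (by simpa [Dotted, tr, rowPerm] using c)

lemma inv_hasInter_tr (hD : IsCNAT D) (h : HasInter D) (h2 : HasInter (tr D)) :
    HasInter (tr (inv D)) := by
  obtain ⟨q, hq⟩ := exists_canon h
  obtain ⟨a, b, hab⟩ := h2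
  rw [hq.inv_eq]
  exact ⟨a, b, inter_tr_of_good (hq.1.good hD) hab⟩

lemma inv_not_inter_tr (hD : IsCNAT D) (h : HasInter D) (h2 : ¬ HasInter (tr D)) :
    ¬ HasInter (tr (inv D)) := by
  intro hc
  have := inv_hasInter_tr (inv_cnat hD h) (inv_inter hD h) hc
  rw [inv_inv hD h] at this
  exact h2 this

open Classical in
lemma sum_reduce (n : ℕ) :
    ∑ D ∈ Finset.univ.filter (fun D : Grid n => IsCNAT D), sgn D =
    ∑ D ∈ Finset.univ.filter
      (fun D : Grid n => IsCNAT D ∧ ¬ HasInter D ∧ ¬ HasInter (tr D)), sgn D := by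
  have s1 : ∑ D ∈ Finset.univ.filter (fun D : Grid n => IsCNAT D ∧ HasInter D), sgn D = 0 := by
    refine Finset.sum_involution (fun D _ => inv D) ?_ ?_ ?_ ?_
    · intro D hD
      simp only [Finset.mem_filter, Finset.mem_univ, true_and] at hD
      rw [inv_sgn hD.1 hD.2]; ring
    · intro D hD hne heq
      simp only [Finset.mem_filter, Finset.mem_univ, true_and] at hD
      have := inv_sgn hD.1 hD.2
      rw [heq] at this
      omega
    · intro D hD
      simp only [Finset.mem_filter, Finset.mem_univ, true_and] at hD ⊢
      exact ⟨inv_cnat hD.1 hD.2, inv_inter hD.1 hD.2⟩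
    · intro D hD
      simp only [Finset.mem_filter, Finset.mem_univ, true_and] at hD
      exact inv_inv hD.1 hD.2
  have s2 : ∑ D ∈ Finset.univ.filter
      (fun D : Grid n => IsCNAT D ∧ ¬ HasInter D ∧ HasInter (tr D)), sgn D = 0 := by
    refine Finset.sum_involution (fun D _ => tr (inv (tr D))) ?_ ?_ ?_ ?_
    · intro D hD
      simp only [Finset.mem_filter, Finset.mem_univ, true_and] at hD
      rw [sgn_tr (inv_cnat (tr_cnat hD.1) hD.2.2), inv_sgn (tr_cnat hD.1) hD.2.2, sgn_tr hD.1]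
      ring
    · intro D hD hne heq
      simp only [Finset.mem_filter, Finset.mem_univ, true_and] at hD
      have h1 := sgn_tr (inv_cnat (tr_cnat hD.1) hD.2.2)
      rw [inv_sgn (tr_cnat hD.1) hD.2.2, sgn_tr hD.1, heq] at h1
      omega
    · intro D hD
      simp only [Finset.mem_filter, Finset.mem_univ, true_and] at hD ⊢
      refine ⟨tr_cnat (inv_cnat (tr_cnat hD.1) hD.2.2), ?_, ?_⟩
      · exact inv_not_inter_tr (tr_cnat hD.1) hD.2.2 hD.2.1
      · exact inv_inter (tr_cnat hD.1) hD.2.2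
    · intro D hD
      simp only [Finset.mem_filter, Finset.mem_univ, true_and] at hD
      change tr (inv (inv (tr D))) = D
      rw [inv_inv (tr_cnat hD.1) hD.2.2]; rfl
  rw [← Finset.sum_filter_add_sum_filter_not _ (fun D : Grid n => HasInter D),
    Finset.filter_filter, s1, zero_add, Finset.filter_filter,
    ← Finset.sum_filter_add_sum_filter_not _ (fun D : Grid n => HasInter (tr D)),
    Finset.filter_filter, Finset.filter_filter]
  simp only [and_assoc]
  rw [s2, zero_add]

end basics

section counting

lemma odd_of_card (n : ℕ) (A : Finset ℕ) (hA : ∀ m ∈ A, m < n) (h0 : 0 ∉ A)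
    (hs : ∀ m, m + 1 ∈ A → m ∉ A) :
    2 * A.card ≤ n ∧ (2 * A.card = n → ∀ m < n, (m ∈ A ↔ m % 2 = 1)) := by
  classical
  have hpos : ∀ m ∈ A, 1 ≤ m := by
    intro m hm
    rcases Nat.eq_zero_or_pos m with h | h
    · subst h; exact absurd hm h0
    · exact h
  have hcard : (A.image fun m => m - 1).card = A.card := by
    apply Finset.card_image_of_injOn
    intro a ha b hb hab
    have := hpos a ha
    have := hpos b hb
    simp only at hab
    omega
  have hdis : Disjoint A (A.image fun m => m - 1) := by
    rw [Finset.disjoint_left]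
    intro a ha hb
    obtain ⟨b, hb', rfl⟩ := Finset.mem_image.1 hb
    have := hpos b hb'
    refine hs (b - 1) ?_ ha
    rwa [Nat.sub_add_cancel this]
  have hsub : A ∪ (A.image fun m => m - 1) ⊆ Finset.range n := by
    intro a ha
    rw [Finset.mem_range]
    rcases Finset.mem_union.1 ha with h | h
    · exact hA a h
    · obtain ⟨b, hb, rfl⟩ := Finset.mem_image.1 h
      have := hA b hb
      omega
  have hc2 : (A ∪ (A.image fun m => m - 1)).card = 2 * A.card := by
    rw [Finset.card_union_of_disjoint hdis, hcard]; ring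
  have hle := Finset.card_le_card hsub
  rw [hc2, Finset.card_range] at hle
  refine ⟨hle, fun heq => ?_⟩
  have hun : A ∪ (A.image fun m => m - 1) = Finset.range n :=
    Finset.eq_of_subset_of_card_le hsub (by rw [hc2, Finset.card_range, heq])
  have hnext : ∀ m < n, m ∉ A → m + 1 ∈ A := by
    intro m hm hn
    have : m ∈ A ∪ (A.image fun m => m - 1) := by rw [hun]; simpa using hm
    rcases Finset.mem_union.1 this with h | h
    · exact absurd h hn
    · obtain ⟨b, hb, hb2⟩ := Finset.mem_image.1 h
      have := hpos b hb
      have e : b = m + 1 := by omega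
      rwa [← e]
  intro m
  induction m with
  | zero => intro _; simpa using h0
  | succ m ih =>
    intro hm
    have ih := ih (by omega)
    constructor
    · intro h
      have := hs m h
      rw [ih] at this
      omega
    · intro h
      exact hnext m (by omega) (by rw [ih]; omega)

variable {n : ℕ} {D : Grid n}

lemma near_of_noInter (hI : ¬ HasInter D) {r j : Fin n} (h : LL D r j) :
    ∃ k, k < r ∧ Dotted D k j ∧ ∀ m, k ≤ m → m < r → ¬ LRow D m := by
  classical
  by_cases hc : ∃ r', r' < r ∧ LRow D r'
  · obtain ⟨a, ha⟩ := hc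
    obtain ⟨r', hr, hm⟩ := Finset.exists_max_image
      (Finset.univ.filter fun r' => r' < r ∧ LRow D r') id ⟨a, by simpa using ha⟩
    simp only [Finset.mem_filter, Finset.mem_univ, true_and, id] at hr hm
    have hcons : ∀ m, r' < m → m < r → ¬ LRow D m :=
      fun m h1 h2 h3 => absurd (hm m ⟨h2, h3⟩) (not_le.2 h1)
    by_contra hcon
    refine hI ⟨r', r, hr.1, hr.2, hcons, j, h, fun k h1 h2 h3 => hcon ?_⟩
    exact ⟨k, h2, h3, fun m h4 h5 => hcons m (h1.trans_le h4) h5⟩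
  · obtain ⟨k, hk, hd⟩ := h.2
    exact ⟨k, hk, hd, fun m _ h2 h3 => hc ⟨m, h2, h3⟩⟩

open Classical in
/-- Set of left leaf rows. -/
noncomputable def rowSet (D : Grid n) : Finset ℕ :=
  (Finset.univ.filter fun i => LRow D i).map Fin.valEmbedding

lemma mem_rowSet {i : Fin n} : (i : ℕ) ∈ rowSet D ↔ LRow D i := by
  classical
  unfold rowSet
  rw [Finset.mem_map]
  constructor
  · rintro ⟨a, ha, hb⟩
    have : a = i := Fin.ext hb
    subst this
    simpa using ha
  · intro h
    exact ⟨i, by simpa using h, rfl⟩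

lemma rowSet_lt (D : Grid n) : ∀ m ∈ rowSet D, m < n := by
  classical
  intro m hm
  unfold rowSet at hm
  obtain ⟨a, -, rfl⟩ := Finset.mem_map.1 hm
  exact a.2

lemma rowSet_zero (D : Grid n) : 0 ∉ rowSet D := by
  intro h
  have hn := rowSet_lt D 0 h
  have h' : LRow D ⟨0, hn⟩ := mem_rowSet.1 h
  obtain ⟨j, -, i, hi, -⟩ := h'
  exact absurd hi (by simp [Fin.lt_def])

lemma rowSet_succ (hI : ¬ HasInter D) (m : ℕ) (h : m + 1 ∈ rowSet D) : m ∉ rowSet D := by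
  have hn := rowSet_lt D _ h
  have h' : LRow D ⟨m + 1, hn⟩ := mem_rowSet.1 h
  obtain ⟨j, hj⟩ := h'
  obtain ⟨k, hk, -, hno⟩ := near_of_noInter hI hj
  intro hm
  refine hno ⟨m, by omega⟩ ?_ ?_ (mem_rowSet.1 hm)
  · rw [Fin.lt_def] at hk
    rw [Fin.le_def]
    simp only at *
    omega
  · simp [Fin.lt_def]

lemma root_not_leaf (hn : 2 ≤ n) (hD : IsCNAT D) {i j : Fin n} (h : IsLeaf D i j) :
    ¬ ((i : ℕ) = 0 ∧ (j : ℕ) = 0) := by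
  rintro ⟨h1, h2⟩
  obtain ⟨j1, hj1, hm⟩ : ∃ j1, Dotted D ⟨1, by omega⟩ j1 ∧ ¬ HasDotLeft D ⟨1, by omega⟩ j1 := by
    classical
    obtain ⟨j0, hj0⟩ := hD.2.2.1 ⟨1, by omega⟩
    obtain ⟨j, hj, hm⟩ := Finset.exists_min_image
      (Finset.univ.filter fun j => Dotted D ⟨1, by omega⟩ j) id ⟨j0, by simpa using hj0⟩
    simp only [Finset.mem_filter, Finset.mem_univ, true_and, id] at hj hm
    exact ⟨j, hj, fun ⟨k, hk, hd⟩ => absurd (hm k hd) (not_le.2 hk)⟩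
  rcases hD.2.1 _ _ hj1 (by simp) with ⟨⟨i', hi', hd⟩, -⟩ | ⟨hx, -⟩
  · have e : i' = i := by
      apply Fin.ext
      rw [Fin.lt_def] at hi'
      simp only at hi'
      omega
    subst e
    have := leaf_row_ge h hd
    have e2 : j1 = j := by
      apply Fin.ext
      rw [Fin.le_def] at this
      omega
    subst e2
    exact h.2.1 ⟨_, hi', hj1⟩
  · exact hm hx

lemma leaf_cases (hn : 2 ≤ n) (hD : IsCNAT D) {i j : Fin n} (h : IsLeaf D i j) :
    LRow (tr D) j ↔ ¬ LRow D i := by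
  have hx := hD.2.1 i j h.1 (root_not_leaf hn hD h)
  have e1 : LRow D i ↔ HasDotAbove D i j := by
    constructor
    · rintro ⟨k, hk⟩
      have := leaf_row_unique h hk.1
      subst this
      exact hk.2
    · intro hh; exact ⟨j, h, hh⟩
  have e2 : LRow (tr D) j ↔ HasDotLeft D i j := by
    constructor
    · rintro ⟨k, hk⟩
      have := leaf_col_unique h (tr_leaf.1 hk.1)
      subst this
      exact hk.2
    · intro hh; exact ⟨i, tr_leaf.2 h, hh⟩
  rw [e1, e2]
  rcases hx with ⟨a, b⟩ | ⟨a, b⟩ <;> tauto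

lemma card_rowSet (hn : 2 ≤ n) (hD : IsCNAT D) : (rowSet D).card + (rowSet (tr D)).card = n := by
  classical
  obtain ⟨π, hπ⟩ := exists_perm hD
  unfold rowSet
  rw [Finset.card_map, Finset.card_map]
  have : (Finset.univ.filter fun i => LRow (tr D) i).card =
      (Finset.univ.filter fun i => ¬ LRow D i).card := by
    symm
    refine Finset.card_equiv π fun i => ?_
    simp [leaf_cases hn hD (hπ i)]
  rw [this, Finset.card_filter_add_card_filter_not]
  simp

lemma noInter_rows {p : ℕ} (hp : 1 ≤ p) {D : Grid (2 * p)} (hD : IsCNAT D) (h1 : ¬ HasInter D)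
    (h2 : ¬ HasInter (tr D)) : ∀ i : Fin (2 * p), LRow D i ↔ (i : ℕ) % 2 = 1 := by
  have a := odd_of_card (2 * p) (rowSet D) (rowSet_lt D) (rowSet_zero D) (rowSet_succ h1)
  have b := odd_of_card (2 * p) (rowSet (tr D)) (rowSet_lt _) (rowSet_zero _) (rowSet_succ h2)
  have c := card_rowSet (by omega) hD
  intro i
  rw [← mem_rowSet]
  exact a.2 (by omega) i i.2

end counting

section doubling
variable {p : ℕ}

/-- Even index. -/
def ev (k : Fin p) : Fin (2 * p) := ⟨2 * k, by omega⟩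
/-- Odd index. -/
def od (k : Fin p) : Fin (2 * p) := ⟨2 * k + 1, by omega⟩

lemma ev_or_od (i : Fin (2 * p)) : (∃ k, i = ev k) ∨ ∃ k, i = od k := by
  rcases Nat.even_or_odd' (i : ℕ) with ⟨k, h | h⟩
  · exact Or.inl ⟨⟨k, by omega⟩, Fin.ext h⟩
  · exact Or.inr ⟨⟨k, by omega⟩, Fin.ext h⟩

lemma ev_lt_ev {a b : Fin p} : ev a < ev b ↔ a < b := by
  simp only [ev, Fin.lt_def]; omega
lemma od_lt_od {a b : Fin p} : od a < od b ↔ a < b := by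
  simp only [od, Fin.lt_def]; omega
lemma ev_lt_od {a b : Fin p} : ev a < od b ↔ a ≤ b := by
  simp only [ev, od, Fin.lt_def, Fin.le_def]; omega
lemma od_lt_ev {a b : Fin p} : od a < ev b ↔ a < b := by
  simp only [ev, od, Fin.lt_def]; omega

lemma exists_two {P : Fin (2 * p) → Prop} : (∃ i, P i) ↔ (∃ k, P (ev k)) ∨ ∃ k, P (od k) := by
  constructor
  · rintro ⟨i, hi⟩
    rcases ev_or_od i with ⟨k, rfl⟩ | ⟨k, rfl⟩
    · exact Or.inl ⟨k, hi⟩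
    · exact Or.inr ⟨k, hi⟩
  · rintro (⟨k, h⟩ | ⟨k, h⟩)
    · exact ⟨_, h⟩
    · exact ⟨_, h⟩

open Classical in
/-- The doubling map: every leaf is replaced by an internal dot with two short leaves. -/
noncomputable def Phi (E : Grid p) : Grid (2 * p) := fun i j =>
  decide (((i : ℕ) % 2 = 0 ∧ (j : ℕ) % 2 = 0 ∧
      Dotted E ⟨(i : ℕ) / 2, by omega⟩ ⟨(j : ℕ) / 2, by omega⟩) ∨
    ((i : ℕ) % 2 ≠ (j : ℕ) % 2 ∧ IsLeaf E ⟨(i : ℕ) / 2, by omega⟩ ⟨(j : ℕ) / 2, by omega⟩))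

variable {E : Grid p}

lemma Phi_ee {k c : Fin p} : Dotted (Phi E) (ev k) (ev c) ↔ Dotted E k c := by
  unfold Phi Dotted ev
  simp

lemma Phi_oe {k c : Fin p} : Dotted (Phi E) (od k) (ev c) ↔ IsLeaf E k c := by
  have h : (2 * (k : ℕ) + 1) / 2 = k := by omega
  have h' : (2 * (k : ℕ) + 1) % 2 = 1 := by omega
  have e : Dotted (Phi E) (od k) (ev c) ↔ Phi E (od k) (ev c) = true := Iff.rfl
  rw [e]
  unfold Phi ev od
  simp [h, h']

lemma Phi_eo {k c : Fin p} : Dotted (Phi E) (ev k) (od c) ↔ IsLeaf E k c := by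
  have h : (2 * (c : ℕ) + 1) / 2 = c := by omega
  have h' : (2 * (c : ℕ) + 1) % 2 = 1 := by omega
  have e : Dotted (Phi E) (ev k) (od c) ↔ Phi E (ev k) (od c) = true := Iff.rfl
  rw [e]
  unfold Phi ev od
  simp [h, h']

lemma Phi_oo {k c : Fin p} : ¬ Dotted (Phi E) (od k) (od c) := by
  have h' : (2 * (c : ℕ) + 1) % 2 = 1 := by omega
  have h2 : (2 * (k : ℕ) + 1) % 2 = 1 := by omega
  have e : Dotted (Phi E) (od k) (od c) ↔ Phi E (od k) (od c) = true := Iff.rfl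
  rw [e]
  unfold Phi od
  simp [h', h2]

lemma grid_ext {n : ℕ} {D D' : Grid n} (h : ∀ i j, Dotted D i j ↔ Dotted D' i j) : D = D' := by
  funext i j
  exact Bool.eq_iff_iff.2 (h i j)

lemma grid_ext2 {D D' : Grid (2 * p)}
    (h1 : ∀ k c, Dotted D (ev k) (ev c) ↔ Dotted D' (ev k) (ev c))
    (h2 : ∀ k c, Dotted D (ev k) (od c) ↔ Dotted D' (ev k) (od c))
    (h3 : ∀ k c, Dotted D (od k) (ev c) ↔ Dotted D' (od k) (ev c))
    (h4 : ∀ k c, Dotted D (od k) (od c) ↔ Dotted D' (od k) (od c)) : D = D' := by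
  refine grid_ext fun i j => ?_
  rcases ev_or_od i with ⟨k, rfl⟩ | ⟨k, rfl⟩ <;> rcases ev_or_od j with ⟨c, rfl⟩ | ⟨c, rfl⟩
  · exact h1 k c
  · exact h2 k c
  · exact h3 k c
  · exact h4 k c

lemma Phi_tr : Phi (tr E) = tr (Phi E) := by
  apply grid_ext2
  · intro k c
    exact Phi_ee.trans (Phi_ee (E := E) (k := c) (c := k)).symm
  · intro k c
    exact Phi_eo.trans (tr_leaf.trans (Phi_oe (E := E) (k := c) (c := k)).symm)
  · intro k c
    exact Phi_oe.trans (tr_leaf.trans (Phi_eo (E := E) (k := c) (c := k)).symm)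
  · intro k c
    exact iff_of_false Phi_oo (Phi_oo (E := E) (k := c) (c := k))

lemma Phi_above_ee {k c : Fin p} (h : Dotted E k c) :
    HasDotAbove (Phi E) (ev k) (ev c) ↔ HasDotAbove E k c := by
  unfold HasDotAbove
  rw [exists_two]
  simp only [Phi_ee, Phi_oe, ev_lt_ev, od_lt_ev]
  refine or_iff_left ?_
  rintro ⟨i, hi, hl⟩
  exact hl.2.1 ⟨k, hi, h⟩

lemma Phi_above_oe {k c : Fin p} (h : IsLeaf E k c) : HasDotAbove (Phi E) (od k) (ev c) :=
  ⟨ev k, ev_lt_od.2 le_rfl, Phi_ee.2 h.1⟩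

lemma Phi_above_eo {k c : Fin p} (h : IsLeaf E k c) : ¬ HasDotAbove (Phi E) (ev k) (od c) := by
  unfold HasDotAbove
  rw [exists_two]
  simp only [Phi_eo, Phi_oo, ev_lt_ev, and_false, exists_false, or_false]
  rintro ⟨i, hi, hl⟩
  exact hi.ne (leaf_col_unique hl h)

lemma Phi_below_ee {k c : Fin p} (h : Dotted E k c) (hE : IsCNAT E) :
    HasDotBelow (Phi E) (ev k) (ev c) := by
  rcases hE.2.2.2.2 k c h with ⟨⟨i, hi, hd⟩, -⟩ | ⟨a, b⟩
  · exact ⟨ev i, ev_lt_ev.2 hi, Phi_ee.2 hd⟩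
  · exact ⟨od k, ev_lt_od.2 le_rfl, Phi_oe.2 ⟨h, a, b⟩⟩

lemma Phi_below_oe {k c : Fin p} (h : IsLeaf E k c) : ¬ HasDotBelow (Phi E) (od k) (ev c) := by
  unfold HasDotBelow
  rw [exists_two]
  simp only [Phi_ee, Phi_oe, od_lt_ev, od_lt_od]
  rintro (⟨i, hi, hl⟩ | ⟨i, hi, hl⟩)
  · exact h.2.1 ⟨i, hi, hl⟩
  · exact h.2.1 ⟨i, hi, hl.1⟩

lemma Phi_below_eo {k c : Fin p} (h : IsLeaf E k c) : ¬ HasDotBelow (Phi E) (ev k) (od c) := by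
  unfold HasDotBelow
  rw [exists_two]
  simp only [Phi_eo, Phi_oo, ev_lt_ev, and_false, exists_false, or_false]
  rintro ⟨i, hi, hl⟩
  exact hi.ne (leaf_col_unique h hl)

lemma Phi_left {i j : Fin (2 * p)} : HasDotLeft (Phi E) i j ↔ HasDotAbove (Phi (tr E)) j i := by
  rw [Phi_tr]; rfl

lemma Phi_right {i j : Fin (2 * p)} : HasDotRight (Phi E) i j ↔ HasDotBelow (Phi (tr E)) j i := by
  rw [Phi_tr]; rfl

lemma Phi_rows (hE : IsCNAT E) (i : Fin (2 * p)) : ∃ j, Dotted (Phi E) i j := by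
  rcases ev_or_od i with ⟨k, rfl⟩ | ⟨k, rfl⟩
  · obtain ⟨j, hj⟩ := hE.2.2.1 k
    exact ⟨ev j, Phi_ee.2 hj⟩
  · obtain ⟨j, hj⟩ := row_leaf hE k
    exact ⟨ev j, Phi_oe.2 hj⟩

lemma Phi_cnat (hE : IsCNAT E) : IsCNAT (Phi E) := by
  have hE' := tr_cnat hE
  refine ⟨?_, ?_, Phi_rows hE, fun j => ?_, ?_⟩
  · intro i j hi hj
    rcases ev_or_od i with ⟨k, rfl⟩ | ⟨k, rfl⟩ <;> rcases ev_or_od j with ⟨c, rfl⟩ | ⟨c, rfl⟩ <;>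
      simp only [ev, od] at hi hj
    · exact Phi_ee.2 (hE.1 k c (by omega) (by omega))
    all_goals omega
  · intro i j hd hn
    rw [Phi_left]
    rcases ev_or_od i with ⟨k, rfl⟩ | ⟨k, rfl⟩ <;> rcases ev_or_od j with ⟨c, rfl⟩ | ⟨c, rfl⟩
    · rw [Phi_ee] at hd
      rw [Phi_above_ee hd, Phi_above_ee (E := tr E) hd]
      exact hE.2.1 k c hd (fun h => hn (by simp [ev, h]))
    · rw [Phi_eo] at hd
      exact Or.inr ⟨Phi_above_oe (tr_leaf.2 hd), Phi_above_eo hd⟩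
    · rw [Phi_oe] at hd
      exact Or.inl ⟨Phi_above_oe hd, Phi_above_eo (tr_leaf.2 hd)⟩
    · exact absurd hd Phi_oo
  · obtain ⟨i, hi⟩ := Phi_rows hE' j
    rw [Phi_tr] at hi
    exact ⟨i, hi⟩
  · intro i j hd
    rw [Phi_right]
    rcases ev_or_od i with ⟨k, rfl⟩ | ⟨k, rfl⟩ <;> rcases ev_or_od j with ⟨c, rfl⟩ | ⟨c, rfl⟩
    · rw [Phi_ee] at hd
      exact Or.inl ⟨Phi_below_ee hd hE, Phi_below_ee (E := tr E) hd hE'⟩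
    · rw [Phi_eo] at hd
      exact Or.inr ⟨Phi_below_eo hd, Phi_below_oe (tr_leaf.2 hd)⟩
    · rw [Phi_oe] at hd
      exact Or.inr ⟨Phi_below_oe hd, Phi_below_eo (tr_leaf.2 hd)⟩
    · exact absurd hd Phi_oo

lemma Phi_LL (hE : IsCNAT E) {i j : Fin (2 * p)} (h : LL (Phi E) i j) :
    ∃ k c, i = od k ∧ j = ev c ∧ IsLeaf E k c := by
  obtain ⟨⟨hd, hb, hr⟩, ha⟩ := h
  rcases ev_or_od i with ⟨k, rfl⟩ | ⟨k, rfl⟩ <;> rcases ev_or_od j with ⟨c, rfl⟩ | ⟨c, rfl⟩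
  · rw [Phi_ee] at hd
    exact absurd (Phi_below_ee hd hE) hb
  · rw [Phi_eo] at hd
    exact absurd ha (Phi_above_eo hd)
  · rw [Phi_oe] at hd
    exact ⟨k, c, rfl, rfl, hd⟩
  · exact absurd hd Phi_oo

lemma Phi_noInter (hE : IsCNAT E) : ¬ HasInter (Phi E) := by
  rintro ⟨r', r, hlt, ⟨j', h'⟩, -, j, h, hno⟩
  obtain ⟨k', c', rfl, rfl, -⟩ := Phi_LL hE h'
  obtain ⟨k, c, rfl, rfl, hl⟩ := Phi_LL hE h
  exact hno (ev k) (od_lt_ev.2 (od_lt_od.1 hlt)) (ev_lt_od.2 le_rfl) (Phi_ee.2 hl.1)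

lemma Phi_noInter_tr (hE : IsCNAT E) : ¬ HasInter (tr (Phi E)) := by
  rw [← Phi_tr]
  exact Phi_noInter (tr_cnat hE)

lemma Phi_inj {E E' : Grid p} (h : Phi E = Phi E') : E = E' := by
  refine grid_ext fun k c => ?_
  rw [← Phi_ee, h, Phi_ee]

/-- Indices as pairs. -/
def pairEquiv (p : ℕ) : Fin p × Fin 2 ≃ Fin (2 * p) :=
  finProdFinEquiv.trans (finCongr (Nat.mul_comm p 2))

lemma pairEquiv_zero (k : Fin p) : pairEquiv p (k, 0) = ev k := by
  apply Fin.ext; simp [pairEquiv, ev]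

lemma pairEquiv_one (k : Fin p) : pairEquiv p (k, 1) = od k := by
  apply Fin.ext; simp [pairEquiv, od, Nat.add_comm]

lemma Phi_sgn (hE : IsCNAT E) : sgn (Phi E) = (-1) ^ p := by
  obtain ⟨π, hπ⟩ := exists_perm hE
  have hleaf : ∀ i j, Dotted (Phi E) i j → ¬ HasDotBelow (Phi E) i j → IsLeaf (Phi E) i j := by
    intro i j hd hb
    rcases (Phi_cnat hE).2.2.2.2 i j hd with h | h
    · exact absurd h.1 hb
    · exact ⟨hd, hb, h.2⟩
  let ρ : Equiv.Perm (Fin p × Fin 2) :=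
    (Equiv.prodCongrLeft fun _ => π) * (Equiv.prodCongrRight fun _ => Equiv.swap 0 1)
  have hρ : IsAssocPerm (Phi E) ((pairEquiv p).permCongr ρ) := by
    intro i
    rcases ev_or_od i with ⟨k, rfl⟩ | ⟨k, rfl⟩
    · have e : (pairEquiv p).permCongr ρ (ev k) = od (π k) := by
        rw [← pairEquiv_zero, ← pairEquiv_one]
        simp [ρ]
      rw [e]
      exact hleaf _ _ (Phi_eo.2 (hπ k)) (Phi_below_eo (hπ k))
    · have e : (pairEquiv p).permCongr ρ (od k) = ev (π k) := by
        rw [← pairEquiv_one, ← pairEquiv_zero]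
        simp [ρ]
      rw [e]
      exact hleaf _ _ (Phi_oe.2 (hπ k)) (Phi_below_oe (hπ k))
  rw [sgn_eq hρ, Equiv.Perm.sign_permCongr, Equiv.Perm.sign_mul, Equiv.Perm.sign_prodCongrLeft,
    Equiv.Perm.sign_prodCongrRight]
  simp

end doubling

section surjective
variable {p : ℕ}

lemma odd_row {D : Grid (2 * p)} (hp : 1 ≤ p) (hD : IsCNAT D) (h1 : ¬ HasInter D)
    (h2 : ¬ HasInter (tr D)) (k : Fin p) :
    ∃ c, LL D (od k) (ev c) ∧ Dotted D (ev k) (ev c) := by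
  have hA := noInter_rows hp hD h1 h2
  have hB := noInter_rows hp (tr_cnat hD) h2 h1
  have hr : LRow D (od k) := (hA _).2 (by simp only [od]; omega)
  obtain ⟨j, hj⟩ := hr
  have hjB : ¬ LRow (tr D) j := by
    rw [leaf_cases (by omega) hD hj.1]
    exact fun h => h ⟨j, hj⟩
  obtain ⟨k0, hk0, hd, hno⟩ := near_of_noInter h1 hj
  have hk : k0 = ev k := by
    apply Fin.ext
    by_contra hne
    rw [Fin.lt_def] at hk0
    simp only [ev, od] at hne hk0
    refine hno ⟨2 * k - 1, by omega⟩ ?_ ?_ ((hA _).2 ?_)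
    · rw [Fin.le_def]; simp only; omega
    · rw [Fin.lt_def]; simp only [od]; omega
    · simp only; omega
  subst hk
  rcases ev_or_od j with ⟨c, rfl⟩ | ⟨c, rfl⟩
  · exact ⟨c, hj, hd⟩
  · exact absurd ((hB _).2 (by simp only [od]; omega)) hjB

lemma Phi_surj {D : Grid (2 * p)} (hp : 1 ≤ p) (hD : IsCNAT D) (h1 : ¬ HasInter D)
    (h2 : ¬ HasInter (tr D)) : ∃ E : Grid p, IsCNAT E ∧ Phi E = D := by
  choose σ hσ hσ' using odd_row hp hD h1 h2
  choose τ hτ hτ' using odd_row hp (tr_cnat hD) h2 h1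
  have lσ : ∀ k, IsLeaf D (od k) (ev (σ k)) := fun k => (hσ k).1
  have lτ : ∀ c, IsLeaf D (ev (τ c)) (od c) := fun c => tr_leaf.1 (hτ c).1
  have dτ : ∀ c, Dotted D (ev (τ c)) (ev c) := hτ'
  have ev_inj : ∀ a b : Fin p, ev a = ev b → a = b := by
    intro a b h
    have := congrArg Fin.val h
    simp only [ev] at this
    apply Fin.ext; omega
  have od_inj : ∀ a b : Fin p, od a = od b → a = b := by
    intro a b h
    have := congrArg Fin.val h
    simp only [od] at this
    apply Fin.ext; omega
  have ev_ne_od : ∀ a b : Fin p, ev a ≠ od b := by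
    intro a b h
    have := congrArg Fin.val h
    simp only [ev, od] at this
    omega
  have ev_le_od : ∀ a b : Fin p, ev a ≤ od b → a ≤ b := by
    intro a b h
    rw [Fin.le_def] at *
    simp only [ev, od] at h
    omega
  have σinj : Function.Injective σ := by
    intro a b h
    have hb := lσ b
    rw [← h] at hb
    exact od_inj _ _ (leaf_col_unique (lσ a) hb)
  have τinj : Function.Injective τ := by
    intro a b h
    have hb := lτ b
    rw [← h] at hb
    exact od_inj _ _ (leaf_row_unique (lτ a) hb)
  have hle : ∀ k, τ (σ k) ≤ k := fun k => ev_le_od _ _ (leaf_col_ge (lσ k) (dτ (σ k)))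
  have hτσ : ∀ k, τ (σ k) = k := by
    intro k
    induction k using WellFoundedLT.induction with
    | ind k ih =>
      by_contra hne
      have hlt := lt_of_le_of_ne (hle k) hne
      have := ih _ hlt
      exact hne (σinj (τinj this))
  have hστ : ∀ c, σ (τ c) = c := fun c => τinj (hτσ (τ c))
  have d_oe : ∀ k c, Dotted D (od k) (ev c) ↔ c = σ k := by
    intro k c
    constructor
    · intro h; exact ev_inj _ _ ((hσ k).row hD h)
    · rintro rfl; exact (lσ k).1
  have d_eo : ∀ k c, Dotted D (ev k) (od c) ↔ c = σ k := by
    intro k c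
    constructor
    · intro h
      have := ev_inj _ _ ((hτ c).row (tr_cnat hD) h)
      rw [this, hστ]
    · rintro rfl
      have := (lτ (σ k)).1
      rwa [hτσ] at this
  have d_oo : ∀ k c, ¬ Dotted D (od k) (od c) := by
    intro k c h
    exact ev_ne_od _ _ ((hσ k).row hD h).symm
  let E : Grid p := fun k c => D (ev k) (ev c)
  have hE : ∀ k c, Dotted E k c ↔ Dotted D (ev k) (ev c) := fun _ _ => Iff.rfl
  have hbelow : ∀ k c, Dotted E k c → (HasDotBelow E k c ↔ c ≠ σ k) := by
    intro k c hd
    constructor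
    · rintro ⟨i, hi, hdi⟩ rfl
      exact absurd (ev_le_od _ _ (leaf_col_ge (lσ k) hdi)) (not_le.2 hi)
    · intro hne
      have hl := lσ (τ c)
      rw [hστ] at hl
      have hle := ev_le_od _ _ (leaf_col_ge hl hd)
      refine ⟨τ c, lt_of_le_of_ne hle ?_, dτ c⟩
      intro h
      apply hne
      rw [h, hστ]
  have hright : ∀ k c, Dotted E k c → (HasDotRight E k c ↔ c ≠ σ k) := by
    intro k c hd
    have hl := lτ (σ k)
    rw [hτσ] at hl
    constructor
    · rintro ⟨i, hi, hdi⟩ rfl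
      exact absurd (ev_le_od _ _ (leaf_row_ge hl hdi)) (not_le.2 hi)
    · intro hne
      exact ⟨σ k, lt_of_le_of_ne (ev_le_od _ _ (leaf_row_ge hl hd)) hne, hσ' k⟩
  have hleaf : ∀ k c, IsLeaf E k c ↔ c = σ k := by
    intro k c
    constructor
    · rintro ⟨a, b, -⟩
      by_contra hne
      exact b ((hbelow k c a).2 hne)
    · rintro rfl
      have hd : Dotted E k (σ k) := hσ' k
      exact ⟨hd, fun h => (hbelow _ _ hd).1 h rfl, fun h => (hright _ _ hd).1 h rfl⟩
  have habove : ∀ k c, Dotted E k c → (HasDotAbove D (ev k) (ev c) ↔ HasDotAbove E k c) := by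
    intro k c hd
    unfold HasDotAbove
    rw [exists_two]
    simp only [ev_lt_ev, od_lt_ev]
    refine or_iff_left ?_
    rintro ⟨i, hi, hdi⟩
    rw [d_oe] at hdi
    subst hdi
    exact (lσ i).2.1 ⟨ev k, od_lt_ev.2 hi, hd⟩
  have hleft : ∀ k c, Dotted E k c → (HasDotLeft D (ev k) (ev c) ↔ HasDotLeft E k c) := by
    intro k c hd
    unfold HasDotLeft
    rw [exists_two]
    simp only [ev_lt_ev, od_lt_ev]
    refine or_iff_left ?_
    rintro ⟨i, hi, hdi⟩
    have hl := lτ i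
    rw [d_eo] at hdi
    subst hdi
    rw [hτσ] at hl
    exact hl.2.2 ⟨ev c, od_lt_ev.2 hi, hd⟩
  refine ⟨E, ⟨?_, ?_, fun k => ⟨σ k, hσ' k⟩, fun c => ⟨τ c, dτ c⟩, ?_⟩, ?_⟩
  · intro i j hi hj
    exact hD.1 _ _ (by simp [ev, hi]) (by simp [ev, hj])
  · intro i j hd hn
    rw [← habove i j hd, ← hleft i j hd]
    refine hD.2.1 _ _ hd ?_
    simpa [ev] using hn
  · intro i j hd
    rw [hbelow i j hd, hright i j hd]
    tauto
  · apply grid_ext2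
    · intro k c; exact Phi_ee
    · intro k c; rw [Phi_eo, hleaf, d_eo]
    · intro k c; rw [Phi_oe, hleaf, d_oe]
    · intro k c; exact iff_of_false Phi_oo (d_oo k c)

end surjective

/-- For every `p ≥ 1`,
`T(2p; +1) = (T_{2p} + (-1)^p T_p) / 2` and `T(2p; -1) = (T_{2p} - (-1)^p T_p) / 2`. -/
theorem cnat_sign_count_even (p : ℕ) (hp : 1 ≤ p) :
    2 * (Nat.card {D : Grid (2 * p) // IsCNAT D ∧
          ∃ π : Equiv.Perm (Fin (2 * p)), IsAssocPerm D π ∧ Equiv.Perm.sign π = 1} : ℤ)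
        = (Nat.card {D : Grid (2 * p) // IsCNAT D} : ℤ)
          + (-1) ^ p * (Nat.card {D : Grid p // IsCNAT D} : ℤ) ∧
    2 * (Nat.card {D : Grid (2 * p) // IsCNAT D ∧
          ∃ π : Equiv.Perm (Fin (2 * p)), IsAssocPerm D π ∧ Equiv.Perm.sign π = -1} : ℤ)
        = (Nat.card {D : Grid (2 * p) // IsCNAT D} : ℤ)
          - (-1) ^ p * (Nat.card {D : Grid p // IsCNAT D} : ℤ) := by
  classical
  have key := sum_reduce (2 * p)
  have hset : Finset.univ.filter
      (fun D : Grid (2 * p) => IsCNAT D ∧ ¬ HasInter D ∧ ¬ HasInter (tr D)) =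
      (Finset.univ.filter fun E : Grid p => IsCNAT E).image Phi := by
    ext D
    simp only [Finset.mem_filter, Finset.mem_univ, true_and, Finset.mem_image]
    constructor
    · rintro ⟨h1, h2, h3⟩
      exact Phi_surj hp h1 h2 h3
    · rintro ⟨E, hE, rfl⟩
      exact ⟨Phi_cnat hE, Phi_noInter hE, Phi_noInter_tr hE⟩
  have hinj : Function.Injective (Phi (p := p)) := fun a b h => Phi_inj h
  rw [hset, Finset.sum_image (fun a _ b _ h => hinj h), Finset.sum_congr rfl
    (fun E hE => Phi_sgn (E := E) (by simpa using hE)), Finset.sum_const, nsmul_eq_mul] at key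
  have hcard : ∀ (m : ℕ) (P : Grid m → Prop) [DecidablePred P],
      Nat.card {D : Grid m // P D} = (Finset.univ.filter P).card := by
    intro m P _
    rw [Nat.card_eq_fintype_card, Fintype.card_subtype]
  have e1 : (∑ D ∈ Finset.univ.filter (fun D : Grid (2 * p) => IsCNAT D), (1 + sgn D)) =
      2 * ((Finset.univ.filter (fun D : Grid (2 * p) => IsCNAT D ∧
          ∃ π : Equiv.Perm (Fin (2 * p)), IsAssocPerm D π ∧ Equiv.Perm.sign π = 1)).card : ℤ) := by
    rw [← Finset.filter_filter, Finset.card_filter]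
    push_cast
    rw [Finset.mul_sum]
    refine Finset.sum_congr rfl fun D _ => ?_
    unfold sgn
    split_ifs <;> norm_num
  have e2 : (∑ D ∈ Finset.univ.filter (fun D : Grid (2 * p) => IsCNAT D), (1 - sgn D)) =
      2 * ((Finset.univ.filter (fun D : Grid (2 * p) => IsCNAT D ∧
          ∃ π : Equiv.Perm (Fin (2 * p)), IsAssocPerm D π ∧ Equiv.Perm.sign π = -1)).card : ℤ) := by
    rw [← Finset.filter_filter, Finset.card_filter]
    push_cast
    rw [Finset.mul_sum]
    refine Finset.sum_congr rfl fun D hD => ?_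
    obtain ⟨π, hπ⟩ := exists_perm (D := D) (by simpa using hD)
    rw [sgn_eq hπ]
    have e : (∃ π : Equiv.Perm (Fin (2 * p)), IsAssocPerm D π ∧ Equiv.Perm.sign π = -1) ↔
        Equiv.Perm.sign π = -1 := by
      constructor
      · rintro ⟨π', h1, h2⟩
        rw [perm_unique hπ h1, h2]
      · intro h; exact ⟨π, hπ, h⟩
    rcases Int.units_eq_one_or (Equiv.Perm.sign π) with hs | hs
    · rw [if_neg]
      · simp [hs]
      · rw [e, hs]; decide
    · rw [if_pos (e.2 hs)]
      simp [hs]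
  rw [Finset.sum_add_distrib, Finset.sum_const, nsmul_eq_mul, mul_one] at e1
  rw [Finset.sum_sub_distrib, Finset.sum_const, nsmul_eq_mul, mul_one] at e2
  constructor
  · rw [hcard, hcard _ (fun D => IsCNAT D), hcard _ (fun D => IsCNAT D), ← e1, key]; ring
  · rw [hcard, hcard _ (fun D => IsCNAT D), hcard _ (fun D => IsCNAT D), ← e2, key]; ring

end CNATf
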